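/- For all positive integers m and n, the function 1/cosh^m((1+i)z/2) has a pole of order m at z_n = (2n-1)(1+i)π/2 with Laurent expansion (-1)^{mn} / cosh^m((1+i)z/2) = (i+1)^m Σ_{l=0}^∞ i^l γ_{l,m} (z - z_n)^{2l-m}, where γ_{l,m} = (-1)^m 2^l Σ_{k₁+...+k_m = l, k_j ≥ 0} Π_{j=1}^m (1 - 2^{1-2k_j}) B_{2k_j} / (2k_j)! is rational. In particular γ_{0,m} = 1 and γ_{1,m} = -m/12. -/

import Mathlib

/-- The rational coefficients `γ_{l,m}` from the Laurent expansion of `1/coshᵐ((1+i)z/2)`. -/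
noncomputable def gam (l m : ℕ) : ℚ :=
  (-1) ^ m * 2 ^ l *
    ∑ k ∈ Finset.Nat.antidiagonalTuple m l,
      ∏ j : Fin m,
        (1 - (2 : ℚ) ^ ((1 : ℤ) - 2 * (k j : ℤ))) * bernoulli (2 * k j) /
          (2 * k j).factorial

/-- The pole `z_n = (2n-1)(1+i)π/2`. -/
noncomputable def zpole (n : ℕ) : ℂ := (2 * (n : ℂ) - 1) * (1 + Complex.I) * Real.pi / 2


noncomputable def cc (k : ℕ) : ℚ :=
  (1 - (2 : ℚ) ^ ((1 : ℤ) - 2 * (k : ℤ))) * bernoulli (2 * k) / (2 * k).factorial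

noncomputable def SS (m l : ℕ) : ℚ :=
  ∑ k ∈ Finset.Nat.antidiagonalTuple m l, ∏ j : Fin m, cc (k j)

lemma SS_succ (m l : ℕ) :
    SS (m + 1) l = ∑ p ∈ Finset.HasAntidiagonal.antidiagonal l, cc p.1 * SS m p.2 := by
  unfold SS
  simp_rw [Finset.mul_sum]
  rw [Finset.sum_sigma']
  refine Finset.sum_bij' (fun k _ => ⟨(k 0, ∑ j : Fin m, k j.succ), fun j => k j.succ⟩)
    (fun s _ => Fin.cons s.1.1 s.2) ?_ ?_ ?_ ?_ ?_
  · intro k hk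
    rw [Finset.Nat.mem_antidiagonalTuple, Fin.sum_univ_succ] at hk
    simp [Finset.Nat.mem_antidiagonalTuple, hk]
  · rintro ⟨⟨a, b⟩, t⟩ h
    simp only [Finset.mem_sigma, Finset.HasAntidiagonal.mem_antidiagonal, Finset.Nat.mem_antidiagonalTuple] at h
    simp [Finset.Nat.mem_antidiagonalTuple, Fin.sum_univ_succ, h]
  · intro k hk
    funext j
    refine Fin.cases ?_ (fun i => ?_) j <;> simp
  · rintro ⟨⟨a, b⟩, t⟩ h
    simp only [Finset.mem_sigma, Finset.HasAntidiagonal.mem_antidiagonal, Finset.Nat.mem_antidiagonalTuple] at h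
    simp [h]
  · intro k hk
    rw [Fin.prod_univ_succ]

lemma cc_zero : cc 0 = -1 := by norm_num [cc]
lemma cc_one : cc 1 = 1 / 24 := by norm_num [cc, Nat.factorial]

lemma SS_zero (l : ℕ) : SS 0 l = if l = 0 then 1 else 0 := by
  cases l <;> simp [SS]

lemma SS_m_zero (m : ℕ) : SS m 0 = (-1) ^ m := by
  induction m with
  | zero => simp [SS_zero]
  | succ m ih => rw [SS_succ]; simp [ih, cc_zero, pow_succ]

lemma SS_m_one (m : ℕ) : SS m 1 = -(-1) ^ m * m / 24 := by
  induction m with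
  | zero => simp [SS_zero]
  | succ m ih =>
    rw [SS_succ, Finset.Nat.antidiagonal_succ]
    simp [ih, cc_zero, cc_one, SS_m_zero, pow_succ]
    ring

lemma gam_eq (l m : ℕ) : gam l m = (-1) ^ m * 2 ^ l * SS m l := rfl

lemma SS_pow (y : ℂ) (h : Summable fun k => ‖(cc k : ℂ) * y ^ k‖) (m : ℕ) :
    (Summable fun l => ‖(SS m l : ℂ) * y ^ l‖) ∧
    (∑' k, (cc k : ℂ) * y ^ k) ^ m = ∑' l, (SS m l : ℂ) * y ^ l := by
  induction m with
  | zero =>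
    have e : (fun l : ℕ => (SS 0 l : ℂ) * y ^ l) = fun l => if l = 0 then 1 else 0 := by
      funext l
      rw [SS_zero]; split_ifs with hl <;> simp [hl]
    constructor
    · refine summable_of_ne_finset_zero (s := {0}) ?_
      intro b hb
      have := congrFun e b

      rw [this]; simp at hb; simp [hb]
    · rw [e]; simp
  | succ m ih =>
    have key : ∀ l, ((SS (m+1) l : ℚ) : ℂ) * y ^ l
        = ∑ p ∈ Finset.HasAntidiagonal.antidiagonal l, ((cc p.1 : ℂ) * y ^ p.1) * ((SS m p.2 : ℂ) * y ^ p.2) := by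
      intro l
      rw [SS_succ]
      push_cast
      rw [Finset.sum_mul]
      refine Finset.sum_congr rfl fun p hp => ?_
      rw [Finset.HasAntidiagonal.mem_antidiagonal] at hp
      rw [← hp, pow_add]; ring
    have t1 := summable_norm_sum_mul_antidiagonal_of_summable_norm h ih.1
    have t2 := tsum_mul_tsum_eq_tsum_sum_antidiagonal_of_summable_norm h ih.1
    constructor
    · refine t1.congr fun l => ?_
      rw [key l]
    · rw [pow_succ', ih.2, t2]
      refine tsum_congr fun l => ?_
      rw [key l]

noncomputable def bb (n : ℕ) : ℚ := bernoulli n / n.factorial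

lemma bb_odd {n : ℕ} (h : Odd n) (h1 : n ≠ 1) : bb n = 0 := by
  have : 1 < n := by rcases h with ⟨k, rfl⟩; omega
  simp [bb, bernoulli_eq_zero_of_odd h this]

lemma bb_bound (n : ℕ) : ‖(bb n : ℂ)‖ ≤ 1 := by
  rcases Nat.even_or_odd' n with ⟨k, rfl | rfl⟩
  · by_cases hk : k = 0
    · subst hk; simp [bb]
    have h := hasSum_zeta_nat hk
    have h2 := hasSum_zeta_two
    have hle := hasSum_le (fun n : ℕ => ?_) h h2
    swap
    · by_cases hn : n = 0
      · subst hn; simp [hk]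
      · have : (1:ℝ) ≤ n := by exact_mod_cast Nat.one_le_iff_ne_zero.2 hn
        apply one_div_le_one_div_of_le (by positivity)
        exact pow_le_pow_right₀ this (by omega)
    have h0 := h.nonneg (fun n : ℕ => by positivity)
    have hpi : Real.pi ^ 2 ≤ Real.pi ^ (2 * k) :=
      pow_le_pow_right₀ (by linarith [Real.pi_gt_three]) (by omega)
    have e : (-1 : ℝ) ^ (k + 1) * (2 : ℝ) ^ (2 * k - 1) * Real.pi ^ (2 * k) *
        bernoulli (2 * k) / (2 * k).factorial = (-1 : ℝ) ^ (k + 1) * ((2 : ℝ) ^ (2 * k - 1) * Real.pi ^ (2 * k) *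
        (bb (2 * k) : ℝ)) := by
      simp only [bb]; push_cast; ring
    rw [e] at hle h0
    have h3 : |(2 : ℝ) ^ (2 * k - 1) * Real.pi ^ (2 * k) * (bb (2 * k) : ℝ)| ≤ Real.pi ^ 2 / 6 := by
      rw [← abs_of_nonneg h0, abs_mul, abs_pow, abs_neg, abs_one, one_pow, one_mul] at hle
      exact hle
    rw [abs_mul, abs_of_pos (by positivity)] at h3
    have h4 : (1:ℝ) ≤ 2 ^ (2 * k - 1) := one_le_pow₀ (by norm_num)
    have h5 : ‖((bb (2 * k) : ℚ) : ℂ)‖ = |((bb (2*k) : ℚ) : ℝ)| := by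
      rw [show ((bb (2 * k) : ℚ) : ℂ) = (((bb (2 * k) : ℚ) : ℝ) : ℂ) by push_cast; rfl,
        Complex.norm_real, Real.norm_eq_abs]
    rw [h5]
    have hpp : 0 < Real.pi ^ (2 * k) := by positivity
    by_contra hcon
    push Not at hcon
    have h6 : Real.pi ^ (2*k) ≤ 2 ^ (2 * k - 1) * Real.pi ^ (2 * k) := by nlinarith
    nlinarith [sq_nonneg Real.pi]
  · by_cases hk : k = 0
    · subst hk; norm_num [bb]
    · rw [bb_odd ⟨k, rfl⟩ (by omega)]; simp

lemma bb_summable {x : ℂ} (hx : ‖x‖ < 1) : Summable fun n => ‖(bb n : ℂ) * x ^ n‖ := by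
  refine Summable.of_nonneg_of_le (fun _ => norm_nonneg _) (fun n => ?_)
    (summable_geometric_of_lt_one (norm_nonneg x) hx)
  rw [norm_mul, norm_pow]
  exact mul_le_of_le_one_left (by positivity) (bb_bound n)

lemma bb_gen {x : ℂ} (hx : ‖x‖ < 1) :
    (∑' n, (bb n : ℂ) * x ^ n) * (Complex.exp x - 1) = x := by
  have hb := bb_summable hx
  have he : Summable fun n : ℕ => ‖x ^ n / (n.factorial : ℂ)‖ :=
    NormedSpace.norm_expSeries_div_summable x
  have hexp : Complex.exp x = ∑' n : ℕ, x ^ n / (n.factorial : ℂ) := by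
    rw [Complex.exp_eq_exp_ℂ, NormedSpace.exp_eq_tsum_div]
  rw [mul_sub, mul_one, hexp, tsum_mul_tsum_eq_tsum_sum_antidiagonal_of_summable_norm hb he,
    ← Summable.tsum_sub (summable_norm_sum_mul_antidiagonal_of_summable_norm hb he).of_norm hb.of_norm]
  have key : ∀ n : ℕ, (∑ kl ∈ Finset.HasAntidiagonal.antidiagonal n, (bb kl.1 : ℂ) * x ^ kl.1 *
      (x ^ kl.2 / (kl.2.factorial : ℂ))) - (bb n : ℂ) * x ^ n = if n = 1 then x else 0 := by
    intro n
    have h := congrArg (PowerSeries.coeff n) (bernoulliPowerSeries_mul_exp_sub_one ℂ)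
    rw [mul_sub, mul_one, map_sub, PowerSeries.coeff_mul, PowerSeries.coeff_X] at h
    simp only [bernoulliPowerSeries, PowerSeries.coeff_mk, PowerSeries.coeff_exp] at h
    have h' : (∑ kl ∈ Finset.HasAntidiagonal.antidiagonal n, (bb kl.1 : ℂ) * (1 / (kl.2.factorial : ℂ)))
      - (bb n : ℂ) = if n = 1 then 1 else 0 := by
      rw [← h]; simp [bb]
    have h2 := congrArg (· * x ^ n) h'
    simp only [sub_mul, Finset.sum_mul] at h2
    refine Eq.trans ?_ (h2.trans ?_)
    · congr 1
      refine Finset.sum_congr rfl fun p hp => ?_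
      rw [Finset.HasAntidiagonal.mem_antidiagonal] at hp
      rw [← hp, pow_add]; ring
    · split_ifs with hn <;> simp [hn]
  simp_rw [key]
  simp

lemma cc_bb (k : ℕ) (x : ℂ) : (2 - 2 ^ (2 * k)) * (bb (2 * k) : ℂ) * x ^ (2 * k)
    = -((cc k : ℂ) * (4 * x ^ 2) ^ k) := by
  have e : (2 : ℂ) ^ ((1 : ℤ) - 2 * (k : ℤ)) = 2 / 4 ^ k := by
    rw [zpow_sub₀ (by norm_num), zpow_one, zpow_mul]; norm_num
  simp only [cc, bb]
  push_cast
  rw [e, mul_pow, ← pow_mul, pow_mul 2 2 k]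
  have : (4:ℂ) ^ k ≠ 0 := pow_ne_zero _ (by norm_num)
  have hf : ((2 * k).factorial : ℂ) ≠ 0 := by exact_mod_cast Nat.factorial_ne_zero _
  field_simp
  norm_num
  ring

lemma main_sum {x : ℂ} (hx : ‖x‖ < 1 / 2) (hx0 : x ≠ 0) :
    (Summable fun k => ‖(cc k : ℂ) * (4 * x ^ 2) ^ k‖) ∧
    (∑' k, (cc k : ℂ) * (4 * x ^ 2) ^ k) * Complex.sinh x = - x ∧ Complex.sinh x ≠ 0 := by
  have hx1 : ‖x‖ < 1 := by linarith
  have hx2 : ‖2 * x‖ < 1 := by rw [norm_mul]; norm_num; linarith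
  have s1 := (bb_summable hx1).of_norm.hasSum
  have s2 := (bb_summable hx2).of_norm.hasSum
  have g1 := bb_gen hx1
  have g2 := bb_gen hx2
  set F1 := ∑' n, (bb n : ℂ) * x ^ n
  set F2 := ∑' n, (bb n : ℂ) * (2 * x) ^ n
  have s3 := (s1.mul_left 2).sub s2
  have e : (fun n => 2 * ((bb n : ℂ) * x ^ n) - (bb n : ℂ) * (2 * x) ^ n)
      = fun n => (2 - 2 ^ n) * (bb n : ℂ) * x ^ n := by
    funext n; rw [mul_pow]; ring
  rw [e] at s3
  have inj : Function.Injective (fun k : ℕ => 2 * k) := fun a b h => by simpa using h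
  have s4 := (Function.Injective.hasSum_iff inj (a := 2 * F1 - F2)
    (f := fun n => (2 - 2 ^ n) * (bb n : ℂ) * x ^ n) ?_).2 s3
  swap
  · intro n hn
    have ho : Odd n := by
      rw [← Nat.not_even_iff_odd]
      rintro ⟨k, rfl⟩
      exact hn ⟨k, by simp; ring⟩
    by_cases h1 : n = 1
    · subst h1; norm_num
    · simp [bb_odd ho h1]
  have s5 : HasSum (fun k => -((cc k : ℂ) * (4 * x ^ 2) ^ k)) (2 * F1 - F2) := by
    convert s4 using 2 with k
    exact (cc_bb k x).symm
  have s6 := s5.neg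
  simp only [neg_neg] at s6
  refine ⟨s6.summable.norm, ?_⟩
  rw [s6.tsum_eq]
  have hE : Complex.exp (2 * x) = Complex.exp x ^ 2 := by
    rw [← Complex.exp_nat_mul]; norm_num
  have hinv : Complex.exp (-x) * Complex.exp x = 1 := by rw [← Complex.exp_add]; simp
  have hsinh : 2 * Complex.sinh x * Complex.exp x = Complex.exp x ^ 2 - 1 := by
    rw [Complex.two_sinh]; linear_combination -hinv
  rw [hE] at g2
  have hne : Complex.exp x ^ 2 - 1 ≠ 0 := by
    intro h; rw [h] at g2; simp at g2; exact hx0 g2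
  have hE0 := Complex.exp_ne_zero x
  constructor
  · apply mul_right_cancel₀ hE0
    linear_combination (-(2 * F1 - F2)) / 2 * hsinh - (Complex.exp x + 1) * g1 + g2 / 2
  · intro h; rw [h] at hsinh; apply hne; rw [← hsinh]; ring

lemma cos_nat_pi_aux (n : ℕ) : Complex.cos ((n : ℂ) * Real.pi) = (-1) ^ n := by
  exact_mod_cast congrArg (fun r : ℝ => (r : ℂ)) (Real.cos_nat_mul_pi n)

lemma cosh_shift (n : ℕ) (z : ℂ) :
    Complex.cosh ((1 + Complex.I) * z / 2)
      = -(-1) ^ n * Complex.I * Complex.sinh ((1 + Complex.I) * (z - zpole n) / 2) := by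
  have e : (1 + Complex.I) * z / 2 = (1 + Complex.I) * (z - zpole n) / 2
      + ((n : ℂ) * Real.pi - Real.pi / 2) * Complex.I := by
    unfold zpole
    linear_combination (2 * (n : ℂ) - 1) * Real.pi / 4 * Complex.I_sq
  rw [e, Complex.cosh_add, Complex.cosh_mul_I, Complex.sinh_mul_I, Complex.cos_sub_pi_div_two,
    Complex.sin_sub_pi_div_two, Complex.sin_nat_mul_pi, cos_nat_pi_aux]
  ring

theorem laurent_expansion_cosh_power (m n : ℕ) (hm : 0 < m) (hn : 0 < n) :
    gam 0 m = 1 ∧ gam 1 m = -(m : ℚ) / 12 ∧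
    ∀ᶠ z in nhdsWithin (zpole n) {zpole n}ᶜ,
      (-1 : ℂ) ^ (m * n) / Complex.cosh ((1 + Complex.I) * z / 2) ^ m
        = (Complex.I + 1) ^ m *
            ∑' l : ℕ, Complex.I ^ l * (gam l m : ℂ) *
              (z - zpole n) ^ (2 * (l : ℤ) - (m : ℤ)) := by
  have hsq : ((-1 : ℚ) ^ m) * (-1) ^ m = 1 := by rw [← mul_pow]; norm_num
  refine ⟨?_, ?_, ?_⟩
  · rw [gam_eq, SS_m_zero]; linear_combination hsq
  · rw [gam_eq, SS_m_one]; linear_combination (-(m:ℚ) / 12) * hsq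
  have hI1 : (1 + Complex.I) ≠ 0 := by
    intro h; have := congrArg Complex.re h; simp at this
  have hev : ∀ᶠ z in nhds (zpole n), ‖(1 + Complex.I) * (z - zpole n) / 2‖ < 1 / 2 := by
    have hc : Continuous fun z : ℂ => ‖(1 + Complex.I) * (z - zpole n) / 2‖ := by fun_prop
    apply hc.continuousAt.eventually_lt continuousAt_const
    simp
  filter_upwards [nhdsWithin_le_nhds hev, self_mem_nhdsWithin] with z hz hz0
  have hw : z - zpole n ≠ 0 := sub_ne_zero.2 hz0
  rw [cosh_shift n]
  set w := z - zpole n with hwdef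
  set x := (1 + Complex.I) * w / 2 with hxdef
  have hx0 : x ≠ 0 := by
    rw [hxdef]; exact div_ne_zero (mul_ne_zero hI1 hw) (by norm_num)
  obtain ⟨h1, h2, h3⟩ := main_sum hz hx0
  have hp := (SS_pow _ h1 m).2
  have hy : 4 * x ^ 2 = 2 * Complex.I * w ^ 2 := by
    rw [hxdef]; linear_combination w ^ 2 * Complex.I_sq
  have hterm : ∀ l : ℕ, Complex.I ^ l * (gam l m : ℂ) * w ^ (2 * (l : ℤ) - (m : ℤ))
      = ((-1) ^ m / w ^ m) * ((SS m l : ℂ) * (4 * x ^ 2) ^ l) := by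
    intro l
    rw [gam_eq, hy, zpow_sub₀ hw, zpow_mul, zpow_natCast, zpow_natCast]
    push_cast
    rw [mul_pow, mul_pow]
    rw [show w ^ (2:ℤ) = w ^ 2 from zpow_ofNat w 2]
    ring
  simp_rw [hterm]
  rw [tsum_mul_left, ← hp]
  set G := ∑' k, (cc k : ℂ) * (4 * x ^ 2) ^ k
  have hG : G = - x / Complex.sinh x := by rw [eq_div_iff h3]; exact h2
  rw [mul_comm m n, pow_mul, ← div_pow, ← div_pow, ← mul_pow, ← mul_pow]
  congr 1
  rw [hG]
  have hn1 : ((-1 : ℂ) ^ n) ≠ 0 := by simp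
  have hI := Complex.I_ne_zero
  rw [hxdef] at h3 ⊢
  field_simp
  linear_combination (-2 - Complex.I) * Complex.I_sq
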